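/- Let N ≥ 2 be an integer and R a commutative ℂ-algebra. For every sequence m : ℤ/Nℤ → M(R) there exists a unique sequence u : ℤ/Nℤ → U(R) such that u(s)·m(s)·u(s+1)⁻¹ ∈ A(R) for every s ∈ ℤ/Nℤ. That is, the group U(R)^{ℤ/Nℤ} acts freely on M(R)^{ℤ/Nℤ} by the cyclic discrete gauge transformation, and A(R)^{ℤ/Nℤ} is a cross-section. -/

import Mathlib

/-- Steinberg's cross-section `A(R)` for `SL(n)` and the standard Coxeter element. -/
def IsSteinbergA {n : ℕ} {R : Type*} [CommRing R] (m : Matrix (Fin n) (Fin n) R) : Prop :=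
  (∀ i j : Fin n, (i : ℕ) = 0 → (j : ℕ) = n - 1 → m i j = (-1) ^ (n - 1)) ∧
  (∀ i j : Fin n, (i : ℕ) = (j : ℕ) + 1 → m i j = 1) ∧
  (∀ i j : Fin n, (i : ℕ) ≠ 0 → (i : ℕ) ≠ (j : ℕ) + 1 → m i j = 0)

/-- Upper unitriangular `n × n` matrices: the group `U(R)`. -/
def IsUniUpper {n : ℕ} {R : Type*} [CommRing R] (u : Matrix (Fin n) (Fin n) R) : Prop :=
  (∀ i : Fin n, u i i = 1) ∧ ∀ i j : Fin n, (j : ℕ) < (i : ℕ) → u i j = 0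

/-- The `R`-points of the double coset `M = U·c̄·U` of `SL(n)`. -/
def IsSteinbergM {n : ℕ} {R : Type*} [CommRing R] (m : Matrix (Fin n) (Fin n) R) : Prop :=
  m.det = 1 ∧
  (∀ i j : Fin n, (i : ℕ) = (j : ℕ) + 1 → m i j = 1) ∧
  (∀ i j : Fin n, (j : ℕ) + 1 < (i : ℕ) → m i j = 0)

/-!
Right multiplication by a unitriangular `v` turns the condition `u * m * v⁻¹ ∈ A` into the row
equations `row (i + 1) of u * m = row i of v`, the corner entry of `A` being forced by `det = 1`.
The cyclic gauge condition is therefore the recursion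
`row i of u (s + 1) = row (i + 1) of u s * m s`. It starts from the last row, which is the same
for all unitriangular matrices, and so it has exactly one solution. The solution is unitriangular
because the Hessenberg shape of `m s` moves the leading `1` of a row vector one place to the left.
-/

open Matrix

section LeadingOne

/-- The vector `v` has its first nonzero entry at `i`, and that entry is `1`. The matrix classes
`U` and `M` are described row by row in these terms. -/
def HasLeadingOne {ι α : Type*} [LT ι] [Zero α] [One α] (v : ι → α) (i : ι) : Prop :=
  v i = 1 ∧ ∀ j < i, v j = 0

theorem hasLeadingOne_last_iff {α : Type*} [Zero α] [One α] {k : ℕ} {v : Fin (k + 1) → α} :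
    HasLeadingOne v (Fin.last k) ↔ v = Pi.single (Fin.last k) 1 := by
  constructor
  · rintro ⟨h_one, h_zero⟩
    funext j
    rcases (Fin.le_last j).eq_or_lt with rfl | hj
    · rw [h_one, Pi.single_eq_same]
    · rw [h_zero j hj, Pi.single_eq_of_ne hj.ne]
  · rintro rfl
    exact ⟨Pi.single_eq_same _ _, fun j hj => Pi.single_eq_of_ne hj.ne _⟩

theorem HasLeadingOne.vecMul {R : Type*} [NonAssocSemiring R] {k : ℕ} {v : Fin (k + 1) → R}
    {m : Matrix (Fin (k + 1)) (Fin (k + 1)) R} {i : Fin k} (hv : HasLeadingOne v i.succ)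
    (hm : ∀ j : Fin k, HasLeadingOne (m j.succ) j.castSucc) :
    HasLeadingOne (v ᵥ* m) i.castSucc := by
  have expand (c : Fin (k + 1)) : (v ᵥ* m) c = ∑ j : Fin k, v j.succ * m j.succ c := by
    rw [Matrix.vecMul, dotProduct, Fin.sum_univ_succ, hv.2 0 i.succ_pos, zero_mul, zero_add]
  constructor
  · rw [expand, Finset.sum_eq_single_of_mem i (Finset.mem_univ i), hv.1, (hm i).1, one_mul]
    intro j _ hji
    rcases hji.lt_or_gt with hlt | hgt
    · rw [hv.2 _ (Fin.succ_lt_succ_iff.2 hlt), zero_mul]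
    · rw [(hm j).2 _ (Fin.castSucc_lt_castSucc_iff.2 hgt), mul_zero]
  · intro c hc
    rw [expand]
    refine Finset.sum_eq_zero fun j _ => ?_
    rcases lt_or_ge j i with hlt | hge
    · rw [hv.2 _ (Fin.succ_lt_succ_iff.2 hlt), zero_mul]
    · rw [(hm j).2 _ (hc.trans_le (Fin.castSucc_le_castSucc_iff.2 hge)), mul_zero]

end LeadingOne

section MatrixClasses

variable {R : Type*} [CommRing R]

theorem isUniUpper_iff_hasLeadingOne {n : ℕ} {u : Matrix (Fin n) (Fin n) R} :
    IsUniUpper u ↔ ∀ i, HasLeadingOne (u i) i :=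
  forall_and.symm

theorem IsUniUpper.det_eq_one {n : ℕ} {u : Matrix (Fin n) (Fin n) R} (hu : IsUniUpper u) :
    u.det = 1 := by
  rw [det_of_isUpperTriangular fun i j => hu.2 i j]
  exact Finset.prod_eq_one fun i _ => hu.1 i

variable {k : ℕ}

theorem IsSteinbergM.hasLeadingOne_row_succ {m : Matrix (Fin (k + 1)) (Fin (k + 1)) R}
    (hm : IsSteinbergM m) (i : Fin k) : HasLeadingOne (m i.succ) i.castSucc :=
  ⟨hm.2.1 _ _ rfl, fun _ hj => hm.2.2 _ _ (Nat.succ_lt_succ hj)⟩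

theorem isSteinbergA_iff_row_succ {a : Matrix (Fin (k + 1)) (Fin (k + 1)) R} :
    IsSteinbergA a ↔
      a 0 (Fin.last k) = (-1) ^ k ∧ ∀ i : Fin k, a i.succ = Pi.single i.castSucc 1 := by
  constructor
  · rintro ⟨h_corner, h_one, h_zero⟩
    refine ⟨h_corner _ _ rfl rfl, fun i => funext fun j => ?_⟩
    rcases eq_or_ne j i.castSucc with rfl | hj
    · rw [h_one _ _ rfl, Pi.single_eq_same]
    · rw [h_zero _ _ (Nat.succ_ne_zero _) fun h => hj (Fin.ext (Nat.succ.inj h).symm),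
        Pi.single_eq_of_ne hj]
  · rintro ⟨h_corner, h_row⟩
    refine ⟨fun i j hi hj => ?_, fun i j hij => ?_, fun i j hi hij => ?_⟩
    · rwa [show i = 0 from Fin.ext hi, show j = Fin.last k from Fin.ext hj]
    · cases i using Fin.cases with
      | zero => exact absurd hij (Nat.succ_ne_zero _).symm
      | succ i => rw [h_row, show j = i.castSucc from Fin.ext (Nat.succ.inj hij).symm,
          Pi.single_eq_same]
    · cases i using Fin.cases with
      | zero => exact absurd rfl hi
      | succ i =>
        rw [h_row, Pi.single_eq_of_ne]
        rintro rfl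
        exact hij rfl

theorem det_eq_of_row_succ_eq_single {a : Matrix (Fin (k + 1)) (Fin (k + 1)) R}
    (ha : ∀ i : Fin k, a i.succ = Pi.single i.castSucc 1) :
    a.det = (-1) ^ k * a 0 (Fin.last k) := by
  have minor_eq_one : a.submatrix Fin.succ Fin.castSucc = 1 := by
    ext i j
    simp [ha, one_apply, Pi.single_apply, eq_comm]
  have column_eq_zero (i : Fin k) : a i.succ (Fin.last k) = 0 := by
    rw [ha, Pi.single_eq_of_ne i.castSucc_ne_last.symm]
  rw [det_succ_column a (Fin.last k), Fin.sum_univ_succ]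
  simp [column_eq_zero, minor_eq_one]

theorem isSteinbergA_iff_of_det_eq_one {a : Matrix (Fin (k + 1)) (Fin (k + 1)) R}
    (ha : a.det = 1) :
    IsSteinbergA a ↔ ∀ i : Fin k, a i.succ = Pi.single i.castSucc 1 := by
  refine isSteinbergA_iff_row_succ.trans (and_iff_right_of_imp fun h_row => ?_)
  calc a 0 (Fin.last k) = (-1) ^ k * ((-1) ^ k * a 0 (Fin.last k)) := by
        rw [← mul_assoc, ← mul_pow, neg_one_mul, neg_neg, one_pow, one_mul]
    _ = (-1) ^ k := by rw [← det_eq_of_row_succ_eq_single h_row, ha, mul_one]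

theorem mul_inv_row_eq_single_iff {l n : Type*} [Fintype n] [DecidableEq n]
    {b : Matrix l n R} {v : Matrix n n R} (hv : IsUnit v.det) {i : l} {j : n} :
    (b * v⁻¹) i = Pi.single j 1 ↔ b i = v j := by
  rw [← (vecMul_injective_of_isUnit ((isUnit_iff_isUnit_det v).2 hv)).eq_iff,
    ← mul_apply_eq_vecMul, nonsing_inv_mul_cancel_right _ _ hv, single_one_vecMul]
  rfl

theorem isSteinbergA_gauge_iff {u m v : Matrix (Fin (k + 1)) (Fin (k + 1)) R}
    (hu : IsUniUpper u) (hm : IsSteinbergM m) (hv : IsUniUpper v) :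
    IsSteinbergA (u * m * v⁻¹) ↔ ∀ i : Fin k, v i.castSucc = u i.succ ᵥ* m := by
  have det_eq_one : (u * m * v⁻¹).det = 1 := by
    rw [det_mul, det_mul, det_nonsing_inv, hu.det_eq_one, hm.1, hv.det_eq_one, Ring.inverse_one,
      one_mul, one_mul]
  have isUnit_det : IsUnit v.det := hv.det_eq_one ▸ isUnit_one
  rw [isSteinbergA_iff_of_det_eq_one det_eq_one]
  refine forall_congr' fun i => ?_
  rw [mul_inv_row_eq_single_iff isUnit_det, mul_apply_eq_vecMul, eq_comm]

end MatrixClasses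

section GaugeMatrix

variable {S R : Type*} {k : ℕ}

section NonAssocSemiring

variable [NonAssocSemiring R] (σ : Equiv.Perm S) (m : S → Matrix (Fin (k + 1)) (Fin (k + 1)) R)

/-- The gauge transformation bringing `m` into the cross-section, for a discrete time `S` with
time step `σ`. It is built row by row from the last row upwards: row `i` at time `s` is row
`i + 1` at the previous time multiplied by the previous `m`. -/
def gaugeMatrix (s : S) : Matrix (Fin (k + 1)) (Fin (k + 1)) R :=
  .of fun i => Fin.reverseInduction (motive := fun _ => S → Fin (k + 1) → R)
    (fun _ => Pi.single (Fin.last k) 1)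
    (fun _ nextRow s => nextRow (σ.symm s) ᵥ* m (σ.symm s)) i s

theorem gaugeMatrix_last (s : S) : gaugeMatrix σ m s (Fin.last k) = Pi.single (Fin.last k) 1 := by
  ext c
  simp only [gaugeMatrix, of_apply, Fin.reverseInduction_last]

theorem gaugeMatrix_castSucc (s : S) (i : Fin k) :
    gaugeMatrix σ m (σ s) i.castSucc = gaugeMatrix σ m s i.succ ᵥ* m s := by
  refine (congrFun (Fin.reverseInduction_castSucc ..) (σ s)).trans ?_
  rw [Equiv.symm_apply_apply]
  rfl

variable {σ m}

theorem eq_gaugeMatrix {u : S → Matrix (Fin (k + 1)) (Fin (k + 1)) R}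
    (h_last : ∀ s, u s (Fin.last k) = Pi.single (Fin.last k) 1)
    (h_castSucc : ∀ s (i : Fin k), u (σ s) i.castSucc = u s i.succ ᵥ* m s) :
    u = gaugeMatrix σ m := by
  suffices h_row : ∀ i s, u s i = gaugeMatrix σ m s i from funext fun s => funext fun i => h_row i s
  intro i
  induction i using Fin.reverseInduction with
  | last => intro s; rw [h_last, gaugeMatrix_last]
  | cast i ih =>
    rw [σ.surjective.forall]
    intro s
    rw [h_castSucc, gaugeMatrix_castSucc, ih]

theorem hasLeadingOne_gaugeMatrix
    (hm : ∀ s (j : Fin k), HasLeadingOne (m s j.succ) j.castSucc) (s : S) (i : Fin (k + 1)) :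
    HasLeadingOne (gaugeMatrix σ m s i) i := by
  induction i using Fin.reverseInduction generalizing s with
  | last => exact hasLeadingOne_last_iff.2 (gaugeMatrix_last σ m s)
  | cast i ih =>
    obtain ⟨s, rfl⟩ := σ.surjective s
    rw [gaugeMatrix_castSucc]
    exact (ih s).vecMul (hm s)

end NonAssocSemiring

theorem stmt_12_general [CommRing R] (σ : Equiv.Perm S)
    (m : S → Matrix (Fin (k + 1)) (Fin (k + 1)) R) (hm : ∀ s, IsSteinbergM (m s)) :
    ∃! u : S → Matrix (Fin (k + 1)) (Fin (k + 1)) R,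
      (∀ s, IsUniUpper (u s)) ∧ ∀ s, IsSteinbergA (u s * m s * (u (σ s))⁻¹) := by
  have gauge_isUniUpper (s : S) : IsUniUpper (gaugeMatrix σ m s) :=
    isUniUpper_iff_hasLeadingOne.2 <|
      hasLeadingOne_gaugeMatrix (fun s => (hm s).hasLeadingOne_row_succ) s
  refine ⟨gaugeMatrix σ m, ⟨gauge_isUniUpper, fun s => ?_⟩, fun u ⟨hu, hA⟩ => ?_⟩
  · rw [isSteinbergA_gauge_iff (gauge_isUniUpper s) (hm s) (gauge_isUniUpper (σ s))]
    exact gaugeMatrix_castSucc σ m s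
  · refine eq_gaugeMatrix (fun s => ?_) fun s => ?_
    · exact hasLeadingOne_last_iff.1 (isUniUpper_iff_hasLeadingOne.1 (hu s) (Fin.last k))
    · exact (isSteinbergA_gauge_iff (hu s) (hm s) (hu (σ s))).1 (hA s)

end GaugeMatrix

/-- for `N ≥ 2` and every `m : ℤ/Nℤ → M(R)` over a commutative `ℂ`-algebra `R`,
there is a unique `u : ℤ/Nℤ → U(R)` with `u(s)·m(s)·u(s+1)⁻¹ ∈ A(R)` for every `s ∈ ℤ/Nℤ`:
`U(R)^{ℤ/Nℤ}` acts freely on `M(R)^{ℤ/Nℤ}` by the cyclic discrete gauge transformation and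
`A(R)^{ℤ/Nℤ}` is a cross-section. -/
theorem stmt_12 (n : ℕ) (hn : 2 ≤ n) (N : ℕ) (hN : 2 ≤ N)
    (R : Type*) [CommRing R] [Algebra ℂ R]
    (m : ZMod N → Matrix (Fin n) (Fin n) R) (hm : ∀ s : ZMod N, IsSteinbergM (m s)) :
    ∃! u : ZMod N → Matrix (Fin n) (Fin n) R,
      (∀ s : ZMod N, IsUniUpper (u s)) ∧
      ∀ s : ZMod N, IsSteinbergA (u s * m s * (u (s + 1))⁻¹) := by
  obtain ⟨k, rfl⟩ := Nat.exists_eq_add_of_le' hn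
  exact stmt_12_general (Equiv.addRight 1) m hm
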